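/- Let ḡ be an invertible symmetric n×n real matrix, let f, Y ∈ ℝⁿ satisfy fᵀ ḡ⁻¹ Y = 0, let φ ∈ ℝ and u > 0 satisfy u² = φ + Yᵀ ḡ⁻¹ Y, and assume 1 − u² fᵀ ḡ⁻¹ f > 0. Set g := ḡ − fYᵀ − Yfᵀ − φ f fᵀ. Then g is invertible and g⁻¹ Y = ḡ⁻¹ Y + (Yᵀ ḡ⁻¹ Y)·(g⁻¹ f). -/

import Mathlib

open Matrix

/-!
Write `F = gbar⁻¹ f`, `W = gbar⁻¹ Y`, `b = Y ⬝ W`. Since `f ⬝ W = 0`, applying `g` to `W` gives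
`g W = Y - b f`; once `g` is invertible this is the identity, after applying `g⁻¹`.

For invertibility, suppose `g x = 0` and put `p = Y ⬝ x`, `q = f ⬝ x`. Applying `gbar⁻¹` gives
`x = (p + φ q) F + q W`. Pairing with `Y` and with `f` (using `Y ⬝ F = 0`, by symmetry of `gbar`)
yields `p = q b` and `q = (p + φ q) (f ⬝ F) = q u² (f ⬝ F)`. As `1 - u² (f ⬝ F) ≠ 0`, first `q`,
then `p`, then `x` vanishes.
-/

theorem deformed_mulVec {n : ℕ} (gbar : Matrix (Fin n) (Fin n) ℝ) (f Y x : Fin n → ℝ) (φ : ℝ) :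
    (gbar - vecMulVec f Y - vecMulVec Y f - φ • vecMulVec f f).mulVec x
      = gbar.mulVec x - (Y ⬝ᵥ x) • f - (f ⬝ᵥ x) • Y - (φ * (f ⬝ᵥ x)) • f := by
  simp [sub_mulVec, smul_mulVec, vecMulVec_mulVec, mul_smul]

theorem raised_shift_identity (n : ℕ)
    (gbar : Matrix (Fin n) (Fin n) ℝ) (hsymm : gbar.IsSymm) (hinv : IsUnit gbar.det)
    (f Y : Fin n → ℝ) (horth : f ⬝ᵥ gbar⁻¹.mulVec Y = 0)
    (φ u : ℝ) (hu : 0 < u) (huu : u ^ 2 = φ + Y ⬝ᵥ gbar⁻¹.mulVec Y)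
    (hpos : 0 < 1 - u ^ 2 * (f ⬝ᵥ gbar⁻¹.mulVec f)) :
    let g : Matrix (Fin n) (Fin n) ℝ :=
      gbar - vecMulVec f Y - vecMulVec Y f - φ • vecMulVec f f
    IsUnit g.det ∧
      g⁻¹.mulVec Y = gbar⁻¹.mulVec Y + (Y ⬝ᵥ gbar⁻¹.mulVec Y) • g⁻¹.mulVec f := by
  intro g
  have horth' : Y ⬝ᵥ gbar⁻¹.mulVec f = 0 := by
    rw [dotProduct_mulVec, ← mulVec_transpose, transpose_nonsing_inv, hsymm.eq, dotProduct_comm]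
    exact horth
  have hdet : IsUnit g.det := by
    rw [isUnit_iff_ne_zero]
    intro h0
    obtain ⟨x, hx0, hx⟩ := exists_mulVec_eq_zero_iff.mpr h0
    rw [deformed_mulVec] at hx
    have hgx : gbar.mulVec x = (Y ⬝ᵥ x + φ * (f ⬝ᵥ x)) • f + (f ⬝ᵥ x) • Y := by
      rw [← sub_eq_zero, ← hx]
      module
    have hx' : x = (Y ⬝ᵥ x + φ * (f ⬝ᵥ x)) • gbar⁻¹.mulVec f
        + (f ⬝ᵥ x) • gbar⁻¹.mulVec Y := by
      have h := congrArg (gbar⁻¹.mulVec ·) hgx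
      simpa [mulVec_mulVec, nonsing_inv_mul _ hinv, mulVec_add, mulVec_smul] using h
    have hp := congrArg (Y ⬝ᵥ ·) hx'
    have hq := congrArg (f ⬝ᵥ ·) hx'
    simp only [dotProduct_add, dotProduct_smul, smul_eq_mul, horth, horth', mul_zero,
      zero_add, add_zero] at hp hq
    have hq0 : f ⬝ᵥ x = 0 := by
      have h : (f ⬝ᵥ x) * (1 - u ^ 2 * (f ⬝ᵥ gbar⁻¹.mulVec f)) = 0 := by
        rw [huu]
        linear_combination hq + (f ⬝ᵥ gbar⁻¹.mulVec f) * hp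
      exact (mul_eq_zero.mp h).resolve_right hpos.ne'
    have hp0 : Y ⬝ᵥ x = 0 := by rw [hp, hq0, zero_mul]
    apply hx0
    rw [hx', hp0, hq0]
    simp
  refine ⟨hdet, ?_⟩
  have hW : g.mulVec (gbar⁻¹.mulVec Y) = Y - (Y ⬝ᵥ gbar⁻¹.mulVec Y) • f := by
    rw [deformed_mulVec, horth, mulVec_mulVec, mul_nonsing_inv _ hinv]
    simp
  have h := congrArg (g⁻¹.mulVec ·) hW
  simp only [mulVec_mulVec, nonsing_inv_mul_cancel_left _ _ hdet, mulVec_sub, mulVec_smul] at h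
  exact (eq_add_of_sub_eq h.symm)
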